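/- arXiv:2301.08777 — 2 statements merged into one kernel-verified Lean document; each statement's English description precedes it below -/
import Mathlib

section
/- Let G be a strong tournament of order at least 3. Then for every integer t ≥ 1, the diameter of ILTT_d^t(G) is at most diam(G). -/
open scoped Classical

noncomputable section

/-- A tournament: a finite directed graph where every pair of distinct nodes
is joined by exactly one arc. -/
structure Tournament where
  V : Type
  [fintypeV : Fintype V]
  [decEqV : DecidableEq V]
  arc : V → V → Prop
  irrefl : ∀ x, ¬ arc x x
  exactlyOne : ∀ x y, x ≠ y → (arc x y ↔ ¬ arc y x)

attribute [instance] Tournament.fintypeV Tournament.decEqV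

namespace Tournament

/-- The ILTT extension: vertices are `V ⊕ V` where `Sum.inl x` is the original
node `x` and `Sum.inr x` is its clone `x'`. -/
def ILTT (T : Tournament) : Tournament where
  V := T.V ⊕ T.V
  arc := fun u v =>
    match u, v with
    | Sum.inl x, Sum.inl y => T.arc x y
    | Sum.inl x, Sum.inr y => T.arc x y
    | Sum.inr x, Sum.inl y => T.arc x y ∨ x = y
    | Sum.inr x, Sum.inr y => T.arc x y
  irrefl := by rintro (x | x) h <;> exact T.irrefl x h
  exactlyOne := by
    rintro (x | x) (y | y) hxy
    · exact T.exactlyOne x y (fun h => hxy (by rw [h]))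
    · by_cases h : x = y
      · subst h; simp [T.irrefl x]
      · have := T.exactlyOne x y h
        simp only [not_or]
        constructor
        · intro ha; exact ⟨this.mp ha, fun h' => h h'.symm⟩
        · intro ha; exact this.mpr ha.1
    · by_cases h : x = y
      · subst h; simp [T.irrefl x]
      · have := T.exactlyOne x y h
        constructor
        · rintro (ha | ha)
          · exact this.mp ha
          · exact absurd ha h
        · intro ha; exact Or.inl (this.mpr ha)
    · exact T.exactlyOne x y (fun h => hxy (by rw [h]))

/-- The dual ILTT extension: identical to `ILTT` except the arcs between
clones are reversed. -/
def ILTTd (T : Tournament) : Tournament where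
  V := T.V ⊕ T.V
  arc := fun u v =>
    match u, v with
    | Sum.inl x, Sum.inl y => T.arc x y
    | Sum.inl x, Sum.inr y => T.arc x y
    | Sum.inr x, Sum.inl y => T.arc x y ∨ x = y
    | Sum.inr x, Sum.inr y => T.arc y x
  irrefl := by rintro (x | x) h <;> exact T.irrefl x h
  exactlyOne := by
    rintro (x | x) (y | y) hxy
    · exact T.exactlyOne x y (fun h => hxy (by rw [h]))
    · by_cases h : x = y
      · subst h; simp [T.irrefl x]
      · have := T.exactlyOne x y h
        simp only [not_or]
        constructor
        · intro ha; exact ⟨this.mp ha, fun h' => h h'.symm⟩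
        · intro ha; exact this.mpr ha.1
    · by_cases h : x = y
      · subst h; simp [T.irrefl x]
      · have := T.exactlyOne x y h
        constructor
        · rintro (ha | ha)
          · exact this.mp ha
          · exact absurd ha h
        · intro ha; exact Or.inl (this.mpr ha)
    · exact T.exactlyOne y x (fun h => hxy (by rw [h]))

/-- A tournament is strong if, for every ordered pair of nodes, there is a
directed path from the first to the second. -/
def Strong (T : Tournament) : Prop := ∀ u v : T.V, Relation.ReflTransGen T.arc u v

/-- `HasWalk T u v n` : there is a directed walk of length `n` from `u` to `v`. -/
def HasWalk (T : Tournament) (u v : T.V) (n : ℕ) : Prop :=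
  ∃ f : Fin (n + 1) → T.V, f 0 = u ∧ f (Fin.last n) = v ∧
    ∀ i : Fin n, T.arc (f i.castSucc) (f i.succ)

/-- The distance from `u` to `v`: the length of a shortest directed path. -/
def dist (T : Tournament) (u v : T.V) : ℕ := sInf {n | HasWalk T u v n}

/-- The diameter: the maximum distance over ordered pairs of distinct nodes. -/
def diam (T : Tournament) : ℕ :=
  (Finset.univ.filter (fun p : T.V × T.V => p.1 ≠ p.2)).sup
    (fun p => T.dist p.1 p.2)

/-- The Wiener index: the sum of distances over ordered pairs of distinct nodes. -/
def wiener (T : Tournament) : ℕ :=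
  ∑ p ∈ Finset.univ.filter (fun p : T.V × T.V => p.1 ≠ p.2), T.dist p.1 p.2

/-- The average distance `L(T) = W(T)/(m(m-1))` where `m` is the order. -/
def avgDist (T : Tournament) : ℝ :=
  (T.wiener : ℝ) / ((Fintype.card T.V : ℝ) * ((Fintype.card T.V : ℝ) - 1))

/-- `J` is a subtournament of `K`. -/
def IsSubtournament (J K : Tournament) : Prop :=
  ∃ f : J.V → K.V, Function.Injective f ∧ ∀ u v : J.V, J.arc u v ↔ K.arc (f u) (f v)

/-- The linear order on `t` nodes. -/
def linearTournament (t : ℕ) : Tournament where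
  V := Fin t
  arc := fun i j => i < j
  irrefl := fun i => lt_irrefl i
  exactlyOne := fun i j h => by
    rw [not_lt]
    exact ⟨le_of_lt, fun hle => hle.lt_of_ne h⟩

/-- A tournament is Hamiltonian if it has a directed cycle through all nodes. -/
def IsHamiltonian (T : Tournament) : Prop :=
  ∃ f : ZMod (Fintype.card T.V) ≃ T.V, ∀ i, T.arc (f i) (f (i + 1))

/-- `S` is an in-dominating set. -/
def InDom (T : Tournament) (S : Finset T.V) : Prop :=
  ∀ u, u ∉ S → ∃ v ∈ S, T.arc u v

/-- `S` is an out-dominating set. -/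
def OutDom (T : Tournament) (S : Finset T.V) : Prop :=
  ∀ u, u ∉ S → ∃ v ∈ S, T.arc v u

/-- The in-domination number. -/
def inDomNum (T : Tournament) : ℕ := sInf {n | ∃ S : Finset T.V, T.InDom S ∧ S.card = n}

/-- The out-domination number. -/
def outDomNum (T : Tournament) : ℕ := sInf {n | ∃ S : Finset T.V, T.OutDom S ∧ S.card = n}

end Tournament

open Tournament

/-!
A walk of positive length in `G` lifts to a walk of the same length in the extension once one of
its two end nodes is replaced by a clone: `x'` has all the out-neighbours of `x`, and `y'` has all
the in-neighbours of `y`, among the nodes of `G`. Distinct clones satisfy `x' → y'` if `y → x`, and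
`x' → x → y'` otherwise. Finally `x' → x`, and any out-neighbour `z` of `x` gives `x → z' → x'`.
As a strong tournament with at least two nodes has diameter at least two, no distance in the
extension exceeds the diameter of `G`. The extension is again strong, so the diameters of the
iterates never increase.
-/

namespace Tournament

section Walks

variable {T T' : Tournament} {u v : T.V} {n : ℕ}

lemma hasWalk_zero_iff : T.HasWalk u v 0 ↔ u = v := by
  constructor
  · rintro ⟨f, rfl, rfl, -⟩
    rfl
  · rintro rfl
    exact ⟨fun _ => u, rfl, rfl, fun i => i.elim0⟩

lemma hasWalk_succ_iff_cons : T.HasWalk u v (n + 1) ↔ ∃ w, T.arc u w ∧ T.HasWalk w v n := by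
  constructor
  · rintro ⟨f, rfl, rfl, hf⟩
    exact ⟨f 1, hf 0, Fin.tail f, rfl, rfl, fun i => hf i.succ⟩
  · rintro ⟨_, huw, f, rfl, rfl, hf⟩
    exact ⟨Fin.cons u f, rfl, rfl, Fin.cases huw hf⟩

lemma hasWalk_succ_iff_concat : T.HasWalk u v (n + 1) ↔ ∃ w, T.HasWalk u w n ∧ T.arc w v := by
  constructor
  · rintro ⟨f, rfl, rfl, hf⟩
    exact ⟨f (Fin.last n).castSucc, ⟨Fin.init f, rfl, rfl, fun i => hf i.castSucc⟩,
      hf (Fin.last n)⟩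
  · rintro ⟨_, ⟨f, rfl, rfl, hf⟩, hwv⟩
    refine ⟨Fin.snoc f v, Fin.snoc_castSucc (i := 0) .., Fin.snoc_last .., ?_⟩
    refine Fin.lastCases ?_ fun i => ?_
    · simpa only [Fin.succ_last, Fin.snoc_castSucc, Fin.snoc_last] using hwv
    · simpa only [Fin.succ_castSucc, Fin.snoc_castSucc] using hf i

lemma hasWalk_one_iff : T.HasWalk u v 1 ↔ T.arc u v := by
  simp only [hasWalk_succ_iff_cons, hasWalk_zero_iff, exists_eq_right]

lemma HasWalk.map {φ : T.V → T'.V} (hφ : ∀ ⦃x y⦄, T.arc x y → T'.arc (φ x) (φ y))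
    (h : T.HasWalk u v n) : T'.HasWalk (φ u) (φ v) n := by
  obtain ⟨f, rfl, rfl, hf⟩ := h
  exact ⟨φ ∘ f, rfl, rfl, fun i => hφ (hf i)⟩

lemma HasWalk.exists_eq_succ (h : T.HasWalk u v n) (huv : u ≠ v) : ∃ m, n = m + 1 :=
  Nat.exists_eq_succ_of_ne_zero fun hn => huv (hasWalk_zero_iff.mp (hn ▸ h))

lemma HasWalk.reflTransGen (h : T.HasWalk u v n) : Relation.ReflTransGen T.arc u v := by
  induction n generalizing v with
  | zero => rw [hasWalk_zero_iff.mp h]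
  | succ n ih =>
    obtain ⟨w, huw, hwv⟩ := hasWalk_succ_iff_concat.mp h
    exact (ih huw).tail hwv

lemma HasWalk.dist_le (h : T.HasWalk u v n) : T.dist u v ≤ n :=
  Nat.sInf_le h

lemma HasWalk.two_le_of_arc (h : T.HasWalk v u n) (huv : T.arc u v) : 2 ≤ n := by
  have hne : v ≠ u := fun e => T.irrefl u (e ▸ huv)
  by_contra! hn
  interval_cases n
  · exact hne (hasWalk_zero_iff.mp h)
  · exact (T.exactlyOne v u hne).mp (hasWalk_one_iff.mp h) huv

end Walks

section Diameter

variable {T : Tournament}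

lemma dist_le_diam {u v : T.V} (huv : u ≠ v) : T.dist u v ≤ T.diam :=
  Finset.le_sup (f := fun p : T.V × T.V => T.dist p.1 p.2)
    (Finset.mem_filter.mpr ⟨Finset.mem_univ (u, v), huv⟩)

lemma diam_le {D : ℕ} (h : ∀ u v : T.V, u ≠ v → T.dist u v ≤ D) : T.diam ≤ D :=
  Finset.sup_le fun p hp => h p.1 p.2 (Finset.mem_filter.mp hp).2

lemma Strong.exists_hasWalk (hT : T.Strong) (u v : T.V) : ∃ n, T.HasWalk u v n := by
  induction hT u v with
  | refl => exact ⟨0, hasWalk_zero_iff.mpr rfl⟩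
  | tail _ hwv ih =>
    obtain ⟨n, hn⟩ := ih
    exact ⟨n + 1, hasWalk_succ_iff_concat.mpr ⟨_, hn, hwv⟩⟩

lemma Strong.hasWalk_dist (hT : T.Strong) (u v : T.V) : T.HasWalk u v (T.dist u v) :=
  Nat.sInf_mem (hT.exists_hasWalk u v)

lemma Strong.exists_arc [Nontrivial T.V] (hT : T.Strong) (u : T.V) : ∃ v, T.arc u v := by
  obtain ⟨w, hwu⟩ := exists_ne u
  obtain rfl | ⟨v, huv, -⟩ := (hT u w).cases_head
  · exact absurd rfl hwu
  · exact ⟨v, huv⟩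

lemma Strong.two_le_diam [Nontrivial T.V] (hT : T.Strong) : 2 ≤ T.diam := by
  obtain ⟨u⟩ : Nonempty T.V := inferInstance
  obtain ⟨v, huv⟩ := hT.exists_arc u
  have hvu : v ≠ u := fun e => T.irrefl u (e ▸ huv)
  exact ((hT.hasWalk_dist v u).two_le_of_arc huv).trans (dist_le_diam hvu)

end Diameter

section DualExtension

variable {T : Tournament} {x y : T.V} {n : ℕ}

lemma ilttd_arc_inl_inl : T.ILTTd.arc (Sum.inl x) (Sum.inl y) ↔ T.arc x y := Iff.rfl

lemma ilttd_arc_inl_inr : T.ILTTd.arc (Sum.inl x) (Sum.inr y) ↔ T.arc x y := Iff.rfl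

lemma ilttd_arc_inr_inl : T.ILTTd.arc (Sum.inr x) (Sum.inl y) ↔ T.arc x y ∨ x = y := Iff.rfl

lemma ilttd_arc_inr_inr : T.ILTTd.arc (Sum.inr x) (Sum.inr y) ↔ T.arc y x := Iff.rfl

instance [Nonempty T.V] : Nontrivial T.ILTTd.V :=
  let ⟨x⟩ := ‹Nonempty T.V›
  ⟨Sum.inl x, Sum.inr x, Sum.inl_ne_inr⟩

lemma HasWalk.ilttd_inl_inl (h : T.HasWalk x y n) :
    T.ILTTd.HasWalk (Sum.inl x) (Sum.inl y) n :=
  h.map fun _ _ => ilttd_arc_inl_inl.mpr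

lemma HasWalk.ilttd_inl_inr (h : T.HasWalk x y (n + 1)) :
    T.ILTTd.HasWalk (Sum.inl x) (Sum.inr y) (n + 1) := by
  obtain ⟨w, hxw, hwy⟩ := hasWalk_succ_iff_concat.mp h
  exact hasWalk_succ_iff_concat.mpr ⟨Sum.inl w, hxw.ilttd_inl_inl, ilttd_arc_inl_inr.mpr hwy⟩

lemma HasWalk.ilttd_inr_inl (h : T.HasWalk x y (n + 1)) :
    T.ILTTd.HasWalk (Sum.inr x) (Sum.inl y) (n + 1) := by
  obtain ⟨w, hxw, hwy⟩ := hasWalk_succ_iff_cons.mp h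
  exact hasWalk_succ_iff_cons.mpr
    ⟨Sum.inl w, ilttd_arc_inr_inl.mpr (Or.inl hxw), hwy.ilttd_inl_inl⟩

lemma ilttd_hasWalk_two_inl_inr_self (h : T.arc x y) :
    T.ILTTd.HasWalk (Sum.inl x) (Sum.inr x) 2 :=
  hasWalk_succ_iff_cons.mpr ⟨Sum.inr y, ilttd_arc_inl_inr.mpr h,
    hasWalk_one_iff.mpr (ilttd_arc_inr_inr.mpr h)⟩

lemma ilttd_hasWalk_one_inr_inl_self (x : T.V) :
    T.ILTTd.HasWalk (Sum.inr x) (Sum.inl x) 1 :=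
  hasWalk_one_iff.mpr (ilttd_arc_inr_inl.mpr (Or.inr rfl))

lemma exists_le_two_ilttd_hasWalk_inr_inr (hxy : x ≠ y) :
    ∃ n ≤ 2, T.ILTTd.HasWalk (Sum.inr x) (Sum.inr y) n := by
  by_cases hyx : T.arc y x
  · exact ⟨1, one_le_two, hasWalk_one_iff.mpr (ilttd_arc_inr_inr.mpr hyx)⟩
  · have hxy' : T.arc x y := (T.exactlyOne x y hxy).mpr hyx
    exact ⟨2, le_rfl, hasWalk_succ_iff_concat.mpr
      ⟨Sum.inl x, ilttd_hasWalk_one_inr_inl_self x, ilttd_arc_inl_inr.mpr hxy'⟩⟩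

-- Bounding `dist` alone would not give strength: `dist` is `0` where no walk exists.
lemma Strong.exists_le_diam_ilttd_hasWalk [Nontrivial T.V] (hT : T.Strong) {p q : T.ILTTd.V}
    (hpq : p ≠ q) : ∃ n ≤ T.diam, T.ILTTd.HasWalk p q n := by
  have exists_walk {x y : T.V} (hxy : x ≠ y) : ∃ m, m + 1 ≤ T.diam ∧ T.HasWalk x y (m + 1) := by
    have hwalk := hT.hasWalk_dist x y
    obtain ⟨m, hm⟩ := hwalk.exists_eq_succ hxy
    exact ⟨m, hm ▸ dist_le_diam hxy, hm ▸ hwalk⟩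
  obtain x | x := p <;> obtain y | y := q
  · obtain ⟨m, hm, hwalk⟩ := exists_walk fun e : x = y => hpq (congrArg Sum.inl e)
    exact ⟨m + 1, hm, hwalk.ilttd_inl_inl⟩
  · obtain rfl | hxy := eq_or_ne x y
    · obtain ⟨z, hxz⟩ := hT.exists_arc x
      exact ⟨2, hT.two_le_diam, ilttd_hasWalk_two_inl_inr_self hxz⟩
    · obtain ⟨m, hm, hwalk⟩ := exists_walk hxy
      exact ⟨m + 1, hm, hwalk.ilttd_inl_inr⟩
  · obtain rfl | hxy := eq_or_ne x y
    · exact ⟨1, one_le_two.trans hT.two_le_diam, ilttd_hasWalk_one_inr_inl_self x⟩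
    · obtain ⟨m, hm, hwalk⟩ := exists_walk hxy
      exact ⟨m + 1, hm, hwalk.ilttd_inr_inl⟩
  · obtain ⟨n, hn, hwalk⟩ :=
      exists_le_two_ilttd_hasWalk_inr_inr fun e : x = y => hpq (congrArg Sum.inr e)
    exact ⟨n, hn.trans hT.two_le_diam, hwalk⟩

lemma Strong.ilttd [Nontrivial T.V] (hT : T.Strong) : T.ILTTd.Strong := by
  intro p q
  obtain rfl | hpq := eq_or_ne p q
  · exact .refl
  · obtain ⟨n, -, hwalk⟩ := hT.exists_le_diam_ilttd_hasWalk hpq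
    exact hwalk.reflTransGen

lemma Strong.diam_ilttd_le [Nontrivial T.V] (hT : T.Strong) : T.ILTTd.diam ≤ T.diam := by
  refine diam_le fun p q hpq => ?_
  obtain ⟨n, hn, hwalk⟩ := hT.exists_le_diam_ilttd_hasWalk hpq
  exact hwalk.dist_le.trans hn

lemma Strong.nontrivial_and_strong_iterate_ilttd [Nontrivial T.V] (hT : T.Strong) (t : ℕ) :
    Nontrivial (ILTTd^[t] T).V ∧ (ILTTd^[t] T).Strong :=
  Function.Iterate.rec (fun S : Tournament => Nontrivial S.V ∧ S.Strong) (f := ILTTd)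
    ⟨‹_›, hT⟩ (fun _ ⟨_, hS⟩ => ⟨inferInstance, hS.ilttd⟩) t

theorem Strong.antitone_diam_iterate_ilttd [Nontrivial T.V] (hT : T.Strong) :
    Antitone fun t => (ILTTd^[t] T).diam := by
  refine antitone_nat_of_succ_le fun t => ?_
  obtain ⟨_, hstrong⟩ := hT.nontrivial_and_strong_iterate_ilttd t
  rw [Function.iterate_succ_apply']
  exact hstrong.diam_ilttd_le

end DualExtension

end Tournament

/-- For a strong tournament `G` of order at least 3 and `t ≥ 1`,
`diam(ILTT_d^t(G)) ≤ diam G`. -/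
theorem stmt5 (G : Tournament) (hcard : 3 ≤ Fintype.card G.V) (hG : G.Strong) :
    ∀ t : ℕ, 1 ≤ t → (Tournament.ILTTd^[t] G).diam ≤ G.diam := by
  intro t _
  have : Nontrivial G.V := Fintype.one_lt_card_iff_nontrivial.mp (by omega)
  exact hG.antitone_diam_iterate_ilttd t.zero_le
end
end

section
/- Let G be a strong tournament on n ≥ 3 nodes, and let α be the number of arcs of G that do not lie on any directed 3-cycle of G. Then for every integer t ≥ 1, the Wiener index of ILTT_d^t(G) satisfies W(ILTT_d^t(G)) = 12·C(2^{t−1}n, 2) + α + 3·2^{t−1}n, where C(m,2) = m(m−1)/2. -/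
open scoped Classical

noncomputable section

open Tournament

/-!
Along an arc `x → y` of a tournament the distance from `x` to `y` is `1`, and the distance from `y`
back to `x` is at least `2`, with equality exactly when the arc lies on a directed 3-cycle. If all
the other arcs have return distance `3`, the Wiener index of a tournament on `m` nodes is therefore
`3 * m.choose 2` plus the number of those arcs.

Dual ILTT extensions of a tournament without sinks satisfy this. Every arc at a clone lies on a
directed 3-cycle, and an arc `x → y` of the base does so in the extension iff it does in the base.
If it does not, every out-neighbor `c` of `y` is an out-neighbor of `x`, which yields the return
walk `y → c' → x' → x`. Each extension doubles the order and keeps the number of arcs off all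
directed 3-cycles. A strong tournament with at least two nodes has no sinks.
-/

theorem three_mul_choose_two_mul (m : ℕ) :
    3 * (2 * m).choose 2 = 12 * m.choose 2 + 3 * m := by
  qify
  push_cast [Nat.cast_choose_two]
  ring

namespace Tournament

variable {T : Tournament} {x y : T.V} {n : ℕ}

section Arcs

theorem ne_of_arc (h : T.arc x y) : x ≠ y := by
  rintro rfl
  exact T.irrefl x h

theorem arc_asymm (h : T.arc x y) : ¬ T.arc y x :=
  (T.exactlyOne x y (ne_of_arc h)).1 h

theorem arc_or_arc_of_ne (h : x ≠ y) : T.arc x y ∨ T.arc y x :=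
  or_iff_not_imp_right.2 (T.exactlyOne x y h).2

variable (T) in
/-- The set of arcs of a tournament, as ordered pairs (tail, head). -/
def arcs : Finset (T.V × T.V) :=
  Finset.univ.filter fun p => T.arc p.1 p.2

@[simp]
theorem mem_arcs {p : T.V × T.V} : p ∈ T.arcs ↔ T.arc p.1 p.2 := by
  simp only [arcs, Finset.mem_filter_univ]

variable (T)

theorem disjoint_arcs_map_swap :
    Disjoint T.arcs (T.arcs.map (Equiv.prodComm T.V T.V).toEmbedding) := by
  rw [Finset.disjoint_left]
  rintro ⟨x, y⟩ hxy hyx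
  simp only [Finset.mem_map_equiv, mem_arcs] at hxy hyx
  exact arc_asymm hxy hyx

theorem arcs_union_map_swap :
    T.arcs ∪ T.arcs.map (Equiv.prodComm T.V T.V).toEmbedding = Finset.univ.offDiag := by
  ext ⟨x, y⟩
  simp only [Finset.mem_union, Finset.mem_map_equiv, mem_arcs, Finset.mem_offDiag,
    Finset.mem_univ, true_and]
  exact ⟨fun h => h.elim ne_of_arc fun h => (ne_of_arc h).symm, arc_or_arc_of_ne⟩

theorem sum_offDiag_eq_sum_arcs {M : Type*} [AddCommMonoid M] (f : T.V × T.V → M) :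
    ∑ p ∈ Finset.univ.offDiag, f p = ∑ p ∈ T.arcs, (f p + f p.swap) := by
  rw [← arcs_union_map_swap, Finset.sum_union T.disjoint_arcs_map_swap, Finset.sum_map,
    Finset.sum_add_distrib]
  rfl

theorem card_arcs : T.arcs.card = (Fintype.card T.V).choose 2 := by
  have h : T.arcs.card + T.arcs.card = Fintype.card T.V * (Fintype.card T.V - 1) := by
    rw [Nat.mul_sub_one, ← Finset.card_univ, ← Finset.offDiag_card, ← arcs_union_map_swap,
      Finset.card_union_of_disjoint T.disjoint_arcs_map_swap, Finset.card_map]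
  rw [Nat.choose_two_right]
  omega

end Arcs

section Walks

theorem hasWalk_zero : T.HasWalk x y 0 ↔ x = y := by
  constructor
  · rintro ⟨f, rfl, rfl, -⟩
    rfl
  · rintro rfl
    exact ⟨fun _ => x, rfl, rfl, fun i => i.elim0⟩

theorem hasWalk_succ : T.HasWalk x y (n + 1) ↔ ∃ z, T.arc x z ∧ T.HasWalk z y n := by
  constructor
  · rintro ⟨f, rfl, rfl, hf⟩
    exact ⟨f 1, hf 0, Fin.tail f, rfl, rfl, fun i => hf i.succ⟩
  · rintro ⟨z, hxz, f, rfl, rfl, hf⟩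
    exact ⟨Fin.cons x f, rfl, rfl, Fin.cases hxz hf⟩

theorem hasWalk_one : T.HasWalk x y 1 ↔ T.arc x y := by
  simp only [hasWalk_succ, hasWalk_zero, exists_eq_right]

theorem hasWalk_two : T.HasWalk x y 2 ↔ ∃ z, T.arc x z ∧ T.arc z y := by
  simp only [hasWalk_succ (n := 1), hasWalk_one]

theorem HasWalk.one_le (h : T.HasWalk x y n) (hxy : x ≠ y) : 1 ≤ n := by
  rw [Nat.one_le_iff_ne_zero]
  rintro rfl
  exact hxy (hasWalk_zero.1 h)

theorem HasWalk.two_le (h : T.HasWalk y x n) (hxy : T.arc x y) : 2 ≤ n := by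
  refine (h.one_le (ne_of_arc hxy).symm).lt_of_ne ?_
  rintro rfl
  exact arc_asymm hxy (hasWalk_one.1 h)

theorem dist_eq_one (h : T.arc x y) : T.dist x y = 1 :=
  IsLeast.csInf_eq ⟨hasWalk_one.2 h, fun _ hn => HasWalk.one_le hn (ne_of_arc h)⟩

theorem dist_eq_two (h : T.arc x y) (hc : ∃ c, T.arc y c ∧ T.arc c x) : T.dist y x = 2 :=
  IsLeast.csInf_eq ⟨hasWalk_two.2 hc, fun _ hn => HasWalk.two_le hn h⟩

variable (T) in
theorem wiener_eq_sum_arcs : T.wiener = ∑ p ∈ T.arcs, (T.dist p.1 p.2 + T.dist p.2 p.1) := by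
  refine Eq.trans (Finset.sum_congr ?_ fun _ _ => rfl)
    (T.sum_offDiag_eq_sum_arcs fun p => T.dist p.1 p.2)
  ext
  simp only [Finset.mem_filter_univ, Finset.mem_offDiag, Finset.mem_univ, true_and]

end Walks

section OffThreeCycle

variable (T) in
/-- The relation "`x → y` is an arc that lies on no directed 3-cycle". Since `x → y` is an arc, such
a cycle is given by a node `c` with `y → c → x`. -/
def OffThreeCycle (x y : T.V) : Prop :=
  T.arc x y ∧ ¬ ∃ c, T.arc y c ∧ T.arc c x

variable (T) in
/-- The set of arcs that lie on no directed 3-cycle; its size is the `α` of the Wiener index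
formula. -/
def offThreeCycleArcs : Finset (T.V × T.V) :=
  Finset.univ.filter fun p => T.arc p.1 p.2 ∧ ¬ ∃ c, T.arc p.2 c ∧ T.arc c p.1

@[simp]
theorem mem_offThreeCycleArcs {p : T.V × T.V} :
    p ∈ T.offThreeCycleArcs ↔ T.OffThreeCycle p.1 p.2 := by
  simp only [offThreeCycleArcs, OffThreeCycle, Finset.mem_filter_univ]

theorem OffThreeCycle.arc_of_arc {c : T.V} (h : T.OffThreeCycle x y) (hyc : T.arc y c) :
    T.arc x c := by
  obtain ⟨hxy, hcycle⟩ := h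
  have hne : x ≠ c := by
    rintro rfl
    exact arc_asymm hxy hyc
  exact (arc_or_arc_of_ne hne).resolve_right fun hcx => hcycle ⟨c, hyc, hcx⟩

theorem OffThreeCycle.three_le_of_hasWalk (h : T.OffThreeCycle x y) (hw : T.HasWalk y x n) :
    3 ≤ n := by
  refine (hw.two_le h.1).lt_of_ne ?_
  rintro rfl
  exact h.2 (hasWalk_two.1 hw)

theorem OffThreeCycle.dist_eq_three (h : T.OffThreeCycle x y) (hw : T.HasWalk y x 3) :
    T.dist y x = 3 :=
  IsLeast.csInf_eq ⟨hw, fun _ hn => h.three_le_of_hasWalk hn⟩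

variable (T) in
theorem wiener_eq_of_hasWalk_three (h : ∀ x y, T.OffThreeCycle x y → T.HasWalk y x 3) :
    T.wiener = 3 * (Fintype.card T.V).choose 2 + T.offThreeCycleArcs.card := by
  have hdist : ∀ p ∈ T.arcs,
      T.dist p.1 p.2 + T.dist p.2 p.1 = 3 + if T.OffThreeCycle p.1 p.2 then 1 else 0 := by
    intro p hp
    rw [mem_arcs] at hp
    rw [dist_eq_one hp]
    split_ifs with hoff
    · rw [hoff.dist_eq_three (h _ _ hoff)]
    · rw [dist_eq_two hp (not_not.1 fun hc => hoff ⟨hp, hc⟩)]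
  have hfilter : T.arcs.filter (fun p => T.OffThreeCycle p.1 p.2) = T.offThreeCycleArcs := by
    ext p
    simp only [Finset.mem_filter, mem_arcs, mem_offThreeCycleArcs, and_iff_right_iff_imp]
    exact And.left
  rw [wiener_eq_sum_arcs, Finset.sum_congr rfl hdist, Finset.sum_add_distrib, Finset.sum_const,
    smul_eq_mul, card_arcs, mul_comm, ← Finset.card_filter, hfilter]

end OffThreeCycle

section Sinkless

variable (T) in
/-- A tournament is sinkless if every node has an out-neighbor. Dual ILTT extensions inherit this
property. -/
def Sinkless : Prop :=
  ∀ x, ∃ y, T.arc x y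

theorem Strong.sinkless [Nontrivial T.V] (hT : T.Strong) : T.Sinkless := by
  intro x
  obtain ⟨z, hzx⟩ := exists_ne x
  obtain hxz | ⟨y, hxy, -⟩ := (hT x z).cases_head
  · exact absurd hxz.symm hzx
  · exact ⟨y, hxy⟩

protected theorem Sinkless.ILTTd (hT : T.Sinkless) : T.ILTTd.Sinkless := by
  rintro (x | x)
  · obtain ⟨y, hxy⟩ := hT x
    exact ⟨Sum.inl y, hxy⟩
  · exact ⟨Sum.inl x, Or.inr rfl⟩

theorem Sinkless.iterate_ILTTd (hT : T.Sinkless) (k : ℕ) : (ILTTd^[k] T).Sinkless :=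
  Function.Iterate.rec Sinkless hT (fun _ => Sinkless.ILTTd) k

end Sinkless

section DualExtension

variable (x y)

theorem offThreeCycle_ILTTd_inl_inl :
    T.ILTTd.OffThreeCycle (Sum.inl x) (Sum.inl y) ↔ T.OffThreeCycle x y := by
  refine and_congr_right fun hxy => not_congr ⟨?_, fun ⟨c, hyc, hcx⟩ => ⟨Sum.inl c, hyc, hcx⟩⟩
  rintro ⟨c | c, hyc, hcx⟩
  · exact ⟨c, hyc, hcx⟩
  · obtain hcx | rfl := hcx
    · exact ⟨c, hyc, hcx⟩
    · exact absurd hyc (arc_asymm (T := T) hxy)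

theorem not_offThreeCycle_ILTTd_inl_inr :
    ¬ T.ILTTd.OffThreeCycle (Sum.inl x) (Sum.inr y) :=
  fun ⟨hxy, hcycle⟩ => hcycle ⟨Sum.inr x, hxy, Or.inr rfl⟩

theorem not_offThreeCycle_ILTTd_inr_inr :
    ¬ T.ILTTd.OffThreeCycle (Sum.inr x) (Sum.inr y) :=
  fun ⟨hyx, hcycle⟩ => hcycle ⟨Sum.inl y, Or.inr rfl, hyx⟩

theorem Sinkless.not_offThreeCycle_ILTTd_inr_inl (hT : T.Sinkless) :
    ¬ T.ILTTd.OffThreeCycle (Sum.inr x) (Sum.inl y) := by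
  rintro ⟨hxy, hcycle⟩
  obtain ⟨c, hyc⟩ := hT y
  have hne : c ≠ x := by
    rintro rfl
    exact hxy.elim (arc_asymm hyc) (ne_of_arc hyc).symm
  obtain hcx | hxc := arc_or_arc_of_ne hne
  · exact hcycle ⟨Sum.inl c, hyc, hcx⟩
  · exact hcycle ⟨Sum.inr c, hyc, hxc⟩

variable {x y}

theorem Sinkless.offThreeCycle_ILTTd_iff (hT : T.Sinkless) {u v : T.ILTTd.V} :
    T.ILTTd.OffThreeCycle u v ↔ ∃ x y, T.OffThreeCycle x y ∧ Sum.inl x = u ∧ Sum.inl y = v := by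
  constructor
  · intro h
    rcases u with x | x <;> rcases v with y | y
    · exact ⟨x, y, (offThreeCycle_ILTTd_inl_inl x y).1 h, rfl, rfl⟩
    · exact absurd h (not_offThreeCycle_ILTTd_inl_inr x y)
    · exact absurd h (hT.not_offThreeCycle_ILTTd_inr_inl x y)
    · exact absurd h (not_offThreeCycle_ILTTd_inr_inr x y)
  · rintro ⟨x, y, h, rfl, rfl⟩
    exact (offThreeCycle_ILTTd_inl_inl x y).2 h

theorem Sinkless.offThreeCycleArcs_ILTTd (hT : T.Sinkless) :
    T.ILTTd.offThreeCycleArcs =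
      T.offThreeCycleArcs.map (Function.Embedding.inl.prodMap Function.Embedding.inl) := by
  ext ⟨u, v⟩
  refine (mem_offThreeCycleArcs.trans hT.offThreeCycle_ILTTd_iff).trans
    (Iff.trans ?_ Finset.mem_map.symm)
  simp only [Prod.exists, mem_offThreeCycleArcs]
  exact exists₂_congr fun _ _ => and_congr_right fun _ => Prod.mk_inj.symm

theorem Sinkless.card_offThreeCycleArcs_ILTTd (hT : T.Sinkless) :
    T.ILTTd.offThreeCycleArcs.card = T.offThreeCycleArcs.card := by
  rw [hT.offThreeCycleArcs_ILTTd]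
  exact Finset.card_map _

theorem Sinkless.card_offThreeCycleArcs_iterate_ILTTd (hT : T.Sinkless) (k : ℕ) :
    (ILTTd^[k] T).offThreeCycleArcs.card = T.offThreeCycleArcs.card := by
  induction k with
  | zero => rfl
  | succ k ih =>
    rw [Function.iterate_succ_apply', (hT.iterate_ILTTd k).card_offThreeCycleArcs_ILTTd, ih]

variable (T) in
theorem card_ILTTd : Fintype.card T.ILTTd.V = 2 * Fintype.card T.V := by
  rw [two_mul]
  exact Fintype.card_sum

variable (T) in
theorem card_iterate_ILTTd (k : ℕ) :
    Fintype.card (ILTTd^[k] T).V = 2 ^ k * Fintype.card T.V := by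
  induction k with
  | zero => rw [pow_zero, one_mul, Function.iterate_zero_apply]
  | succ k ih => rw [Function.iterate_succ_apply', card_ILTTd, ih, pow_succ', mul_assoc]

theorem OffThreeCycle.hasWalk_ILTTd_three (h : T.OffThreeCycle x y) (hy : ∃ c, T.arc y c) :
    T.ILTTd.HasWalk (Sum.inl y) (Sum.inl x) 3 := by
  obtain ⟨c, hyc⟩ := hy
  exact hasWalk_succ.2
    ⟨Sum.inr c, hyc, hasWalk_two.2 ⟨Sum.inr x, h.arc_of_arc hyc, Or.inr rfl⟩⟩

theorem Sinkless.wiener_ILTTd (hT : T.Sinkless) :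
    T.ILTTd.wiener = 3 * (2 * Fintype.card T.V).choose 2 + T.offThreeCycleArcs.card := by
  rw [wiener_eq_of_hasWalk_three, card_ILTTd, hT.card_offThreeCycleArcs_ILTTd]
  intro u v h
  obtain ⟨x, y, hxy, rfl, rfl⟩ := hT.offThreeCycle_ILTTd_iff.1 h
  exact hxy.hasWalk_ILTTd_three (hT y)

end DualExtension

end Tournament

theorem stmt9_general (G : Tournament) (hG : G.Sinkless) (t : ℕ) (ht : 1 ≤ t) :
    (Tournament.ILTTd^[t] G).wiener =
      12 * Nat.choose (2 ^ (t - 1) * Fintype.card G.V) 2 + G.offThreeCycleArcs.card +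
        3 * (2 ^ (t - 1) * Fintype.card G.V) := by
  obtain ⟨k, rfl⟩ := Nat.exists_eq_add_of_le' ht
  rw [Function.iterate_succ_apply', (hG.iterate_ILTTd k).wiener_ILTTd, card_iterate_ILTTd,
    hG.card_offThreeCycleArcs_iterate_ILTTd, three_mul_choose_two_mul, Nat.add_sub_cancel,
    add_right_comm]

/-- For a strong tournament `G` on `n ≥ 3` nodes, with `α` the
number of arcs of `G` not on any directed 3-cycle, for every `t ≥ 1`,
`W(ILTT_d^t(G)) = 12·C(2^(t-1)·n, 2) + α + 3·2^(t-1)·n`. -/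
theorem stmt9 (G : Tournament) (n : ℕ) (hn : Fintype.card G.V = n)
    (hcard : 3 ≤ n) (hG : G.Strong) (a : ℕ)
    (ha : a = (Finset.univ.filter (fun p : G.V × G.V =>
        G.arc p.1 p.2 ∧ ¬ ∃ c : G.V, G.arc p.2 c ∧ G.arc c p.1)).card) :
    ∀ t : ℕ, 1 ≤ t → (Tournament.ILTTd^[t] G).wiener =
      12 * Nat.choose (2 ^ (t - 1) * n) 2 + a + 3 * (2 ^ (t - 1) * n) := by
  have : Nontrivial G.V := Fintype.one_lt_card_iff_nontrivial.1 (by omega)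
  subst hn ha
  exact stmt9_general G hG.sinkless
end
end
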